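/- Let f and g be homogeneous polynomials of degree d ≥ 1 in ℂ[x,y,z], and suppose the curve defined by f is nonsingular, i.e. the only common zero in ℂ³ of the three partial derivatives ∂f/∂x, ∂f/∂y, ∂f/∂z is (0,0,0). Then the set of parameters λ ∈ ℂ for which the curve defined by f + λg is singular — i.e. for which there exists (x,y,z) ∈ ℂ³ ∖ {(0,0,0)} at which all three partial derivatives of f + λg vanish — is finite. -/

import Mathlib

/-!
Homogeneous forms `q i` have no common zero besides the origin iff they generate an ideal containing
every form of some degree `n` (Nullstellensatz), that is, iff for some `n` the linear map
`(a i) ↦ ∑ a i * q i`, truncated to degree `n`, is onto the finite-dimensional space of forms of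
degree `n`. In a pencil `A + l • B` of linear maps onto a finite-dimensional space with `A`
surjective, surjectivity fails for only finitely many `l`: composing with a section `s` of `A` turns
the pencil into `1 + l • (B ∘ s)`, which is invertible unless `-l⁻¹` is an eigenvalue of `B ∘ s`.
Applied to the partial derivatives of `f + l • g`, this bounds the singular members of the pencil.
-/

open MvPolynomial

theorem finite_setOf_not_surjective_add_smul {K V W : Type*} [Field K] [AddCommGroup V] [Module K V]
    [AddCommGroup W] [Module K W] [FiniteDimensional K W] {A : V →ₗ[K] W}
    (hA : Function.Surjective A) (B : V →ₗ[K] W) :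
    {l : K | ¬ Function.Surjective (A + l • B)}.Finite := by
  obtain ⟨s, hs⟩ := A.exists_rightInverse_of_surjective (LinearMap.range_eq_top.2 hA)
  have A_s (w : W) : A (s w) = w := LinearMap.congr_fun hs w
  refine ((Module.End.finite_spectrum (B ∘ₗ s)).image fun μ => -μ⁻¹).subset fun l hl => ?_
  have l_ne_zero : l ≠ 0 := by
    rintro rfl
    exact hl (by simpa using hA)
  refine ⟨-l⁻¹, fun isUnit => hl fun w => ?_, by simp⟩
  obtain ⟨u, hu⟩ := ((Module.End.isUnit_iff _).1 isUnit).surjective (-l⁻¹ • w)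
  have resolvent_eq : -l⁻¹ • u - B (s u) = -l⁻¹ • w := by simpa using hu
  refine ⟨s u, ?_⟩
  calc (A + l • B) (s u) = -l • (-l⁻¹ • u - B (s u)) := by
        simp [A_s, smul_sub, smul_smul, l_ne_zero]
    _ = w := by rw [resolvent_eq, smul_smul, neg_mul_neg, mul_inv_cancel₀ l_ne_zero, one_smul]

section ZeroLocus

variable {σ K : Type*} [Field K]

theorem exists_homogeneousSubmodule_le_of_zeroLocus_subset_zero [Finite σ] [IsAlgClosed K]
    {I : Ideal (MvPolynomial σ K)} (hI : zeroLocus K I ⊆ {0}) :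
    ∃ n, homogeneousSubmodule σ K n ≤ I.restrictScalars K := by
  have vars_le_radical : idealOfVars σ K ≤ I.radical := by
    rw [← vanishingIdeal_zeroLocus_eq_radical (K := K), Ideal.span_le]
    rintro _ ⟨j, rfl⟩ x hx
    simp [Set.mem_singleton_iff.1 (hI hx)]
  obtain ⟨n, hn⟩ := Ideal.exists_pow_le_of_le_radical_of_fg vars_le_radical (idealOfVars_fg σ K)
  refine ⟨n, fun p hp => hn ((mem_pow_idealOfVars_iff n p).2 fun m hm => ?_)⟩
  exact (IsHomogeneous.degree_eq_sum_deg_support hp hm).le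

theorem zeroLocus_subset_zero_of_homogeneousSubmodule_le {I : Ideal (MvPolynomial σ K)} {n : ℕ}
    (hI : homogeneousSubmodule σ K n ≤ I.restrictScalars K) : zeroLocus K I ⊆ {0} := by
  refine fun x hx => funext fun j => ?_
  have X_pow_mem : (X j ^ n : MvPolynomial σ K) ∈ I := hI (isHomogeneous_X_pow j n)
  exact eq_zero_of_pow_eq_zero (by simpa using hx _ X_pow_mem)

theorem zeroLocus_span_range {ι : Type*} (q : ι → MvPolynomial σ K) :
    zeroLocus K (Ideal.span (Set.range q)) = {x | ∀ i, eval x (q i) = 0} := by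
  simp [zeroLocus_span, aeval_eq_eval]

end ZeroLocus

section MacaulayMap

variable {σ ι R : Type*} [CommSemiring R]

/-- The degree `n` multiplication map `(a i) ↦ (∑ a i * q i)ₙ` of a family `q` of polynomials, whose
matrix in the monomial bases is the Macaulay matrix of `q`. The coefficients `a i` are arbitrary and
it is the combination that is truncated to degree `n`; for homogeneous `q` only one homogeneous
component of each `a i` matters. -/
noncomputable def macaulayMap (n : ℕ) (q : ι → MvPolynomial σ R) :
    (ι →₀ MvPolynomial σ R) →ₗ[R] homogeneousSubmodule σ R n :=
  ((homogeneousComponent n).codRestrict _ (homogeneousComponent_mem n)) ∘ₗ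
    (Finsupp.linearCombination (MvPolynomial σ R) q).restrictScalars R

theorem macaulayMap_apply (n : ℕ) (q : ι → MvPolynomial σ R) (a : ι →₀ MvPolynomial σ R) :
    (macaulayMap n q a : MvPolynomial σ R) =
      homogeneousComponent n (Finsupp.linearCombination (MvPolynomial σ R) q a) :=
  rfl

theorem macaulayMap_add_smul (n : ℕ) (q r : ι → MvPolynomial σ R) (l : R) :
    macaulayMap n (q + l • r) = macaulayMap n q + l • macaulayMap n r := by
  refine Finsupp.lhom_ext fun i p => Subtype.ext ?_
  simp [macaulayMap_apply, mul_add]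

attribute [local instance] MvPolynomial.gradedAlgebra in
theorem macaulayMap_surjective_iff {n : ℕ} {q : ι → MvPolynomial σ R} {e : ι → ℕ}
    (hq : ∀ i, (q i).IsHomogeneous (e i)) :
    Function.Surjective (macaulayMap n q) ↔
      homogeneousSubmodule σ R n ≤ (Ideal.span (Set.range q)).restrictScalars R := by
  constructor
  · intro surjective p hp
    obtain ⟨a, ha⟩ := surjective ⟨p, hp⟩
    have span_isHomogeneous :
        (Ideal.span (Set.range q)).IsHomogeneous (homogeneousSubmodule σ R) :=
      Ideal.homogeneous_span _ _ (Set.forall_mem_range.2 fun i => ⟨e i, hq i⟩)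
    have combination_mem : Finsupp.linearCombination (MvPolynomial σ R) q a ∈
        Ideal.span (Set.range q) := Finsupp.mem_span_range_iff_exists_finsupp.2 ⟨a, rfl⟩
    have p_eq : homogeneousComponent n (Finsupp.linearCombination (MvPolynomial σ R) q a) = p :=
      congrArg Subtype.val ha
    exact p_eq ▸ homogeneousComponent_mem_of_mem span_isHomogeneous combination_mem n
  · rintro le ⟨p, hp⟩
    obtain ⟨a, ha⟩ := Finsupp.mem_span_range_iff_exists_finsupp.1 (le hp)
    refine ⟨a, Subtype.ext ?_⟩
    rw [macaulayMap_apply, Finsupp.linearCombination_apply, ha]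
    exact homogeneousComponent_eq_self hp

end MacaulayMap

section Pencil

variable {σ K : Type*} [Finite σ] [Field K] [IsAlgClosed K]

theorem finite_setOf_exists_common_zero_add_smul {ι : Type*}
    {q r : ι → MvPolynomial σ K} {e : ι → ℕ} (hq : ∀ i, (q i).IsHomogeneous (e i))
    (hr : ∀ i, (r i).IsHomogeneous (e i)) (hzero : ∀ x, (∀ i, eval x (q i) = 0) → x = 0) :
    {l : K | ∃ x ≠ 0, ∀ i, eval x ((q + l • r) i) = 0}.Finite := by
  obtain ⟨n, hn⟩ := exists_homogeneousSubmodule_le_of_zeroLocus_subset_zero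
    ((zeroLocus_span_range q).trans_subset hzero)
  have : FiniteDimensional K (homogeneousSubmodule σ K n) :=
    Module.Finite.iff_fg.2 (homogeneousSubmodule_fg σ K n)
  refine (finite_setOf_not_surjective_add_smul ((macaulayMap_surjective_iff hq).2 hn)
    (macaulayMap n r)).subset ?_
  rintro l ⟨x, x_ne_zero, hx⟩ surjective
  have pencil_isHomogeneous (i : ι) : ((q + l • r) i).IsHomogeneous (e i) :=
    (hq i).add ((homogeneousSubmodule σ K (e i)).smul_mem l (hr i))
  rw [← macaulayMap_add_smul, macaulayMap_surjective_iff pencil_isHomogeneous] at surjective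
  exact x_ne_zero (zeroLocus_subset_zero_of_homogeneousSubmodule_le surjective
    ((zeroLocus_span_range _).symm.subset hx))

theorem t15_general {d : ℕ} {f g : MvPolynomial σ K}
    (hf : f.IsHomogeneous d) (hg : g.IsHomogeneous d)
    (hns : ∀ x : σ → K, (∀ i, eval x (pderiv i f) = 0) → x = 0) :
    {l : K | ∃ x : σ → K, x ≠ 0 ∧ ∀ i, eval x (pderiv i (f + C l * g)) = 0}.Finite := by
  simpa [pderiv_C_mul, smul_eq_C_mul] using
    finite_setOf_exists_common_zero_add_smul (fun _ => hf.pderiv) (fun _ => hg.pderiv) hns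

end Pencil

/-- If `f` defines a nonsingular projective plane curve of degree `d ≥ 1` and `g` is homogeneous
of degree `d`, then `f + λg` defines a singular curve for only finitely many `λ ∈ ℂ`. -/
theorem t15 (d : ℕ) (hd : 1 ≤ d) (f g : MvPolynomial (Fin 3) ℂ)
    (hf : f.IsHomogeneous d) (hg : g.IsHomogeneous d)
    (hns : ∀ x : Fin 3 → ℂ,
      (∀ i : Fin 3, MvPolynomial.eval x (MvPolynomial.pderiv i f) = 0) → x = 0) :
    {l : ℂ | ∃ x : Fin 3 → ℂ, x ≠ 0 ∧
      ∀ i : Fin 3,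
        MvPolynomial.eval x (MvPolynomial.pderiv i (f + MvPolynomial.C l * g)) = 0}.Finite :=
  t15_general hf hg hns
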